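/- Let 1, α₁, α₂ be linearly independent over ℤ and let m_{ν−1}, m_ν, m_{ν+1} be consecutive best approximations such that the determinant of the 3×3 matrix with rows m_{ν−1}, m_ν, m_{ν+1} is nonzero. Suppose ζ_ν ≤ (8·M_{ν−1}·M_{ν+1})^{−1} and ζ_{ν+1} ≤ (8·M_{ν−1}·M_ν)^{−1}. Then D_ν := |m_{1,ν}·m_{2,ν+1} − m_{2,ν}·m_{1,ν+1}| satisfies D_ν ≥ (2·ζ_{ν−1})^{−1}, and consequently D_ν ≥ M_ν²/2. -/

import Mathlib

/-!
Expanding the determinant along the column of values `ζ(m)` gives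
`det = ζ(a) D(b, c) - ζ(b) D(a, c) + ζ(c) D(a, b)`, where `|D(u, v)| ≤ 2 M(u) M(v)`. The smallness
of `ζ(b)` and `ζ(c)` makes each of the last two terms at most `1/4`, and `det` is a nonzero
integer, so `|ζ(a)| |D(b, c)| ≥ 1/2`. By pigeonhole some integer vector of height less than `M(b)`
has `|ζ| ≤ M(b)⁻²`, and `a` is at least as good as every vector of height less than `M(b)`.
-/

/-- distance from a real number to the nearest integer -/
noncomputable def nint (ξ : ℝ) : ℝ := |ξ - round ξ|

/-- `1, α₁, α₂` are linearly independent over `ℤ` -/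
def ZLinIndep (α₁ α₂ : ℝ) : Prop :=
  ∀ a b c : ℤ, (a : ℝ) + b * α₁ + c * α₂ = 0 → a = 0 ∧ b = 0 ∧ c = 0

/-- the golden ratio τ = (1+√5)/2 -/
noncomputable def tau : ℝ := (1 + Real.sqrt 5) / 2

/-- the value of the linear form ζ(m) = m₀ + m₁α₁ + m₂α₂ at an integer vector m -/
noncomputable def zform (α₁ α₂ : ℝ) (m : ℤ × ℤ × ℤ) : ℝ :=
  (m.1 : ℝ) + m.2.1 * α₁ + m.2.2 * α₂

/-- the height M(m) = max{|m₁|, |m₂|} of an integer vector m = (m₀, m₁, m₂) -/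
def hgt (m : ℤ × ℤ × ℤ) : ℤ := max |m.2.1| |m.2.2|

/-- `m` is a best approximation (in the sense of the linear form) for `α₁, α₂`:
`|ζ(m)|` is minimal among all integer vectors `n` with `0 < max{|n₁|,|n₂|} ≤ max{|m₁|,|m₂|}`. -/
noncomputable def IsBestApprox (α₁ α₂ : ℝ) (m : ℤ × ℤ × ℤ) : Prop :=
  0 < hgt m ∧
  ∀ n : ℤ × ℤ × ℤ, 0 < hgt n → hgt n ≤ hgt m →
    |zform α₁ α₂ m| ≤ |zform α₁ α₂ n|

/-- `m` and `m'` are two consecutive best approximations (`m = m_ν`, `m' = m_{ν+1}`):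
both are best approximations, `M(m) < M(m')`, and no best approximation has height
strictly between them. -/
noncomputable def ConsecutiveBest (α₁ α₂ : ℝ) (m m' : ℤ × ℤ × ℤ) : Prop :=
  IsBestApprox α₁ α₂ m ∧ IsBestApprox α₁ α₂ m' ∧ hgt m < hgt m' ∧
  ∀ n : ℤ × ℤ × ℤ, IsBestApprox α₁ α₂ n → hgt n ≤ hgt m ∨ hgt m' ≤ hgt n

lemma nint_le_abs_sub_intCast (ξ : ℝ) (k : ℤ) : nint ξ ≤ |ξ - k| :=
  round_le ξ k

lemma nint_eq_min_fract (ξ : ℝ) : nint ξ = min (Int.fract ξ) (1 - Int.fract ξ) :=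
  abs_sub_round_eq_min ξ

lemma nint_sub_le_abs_fract_sub_fract (ξ η : ℝ) : nint (ξ - η) ≤ |Int.fract ξ - Int.fract η| := by
  convert nint_le_abs_sub_intCast (ξ - η) (⌊ξ⌋ - ⌊η⌋) using 2
  rw [Int.fract, Int.fract]
  push_cast
  ring

lemma floor_mul_fract_mem_Icc_of_one_lt_nint_mul {ξ : ℝ} {N : ℕ} (hξ : 1 < nint ξ * N) :
    ⌊(N : ℝ) * Int.fract ξ⌋ ∈ Finset.Icc (1 : ℤ) (N - 2) := by
  rw [nint_eq_min_fract, min_mul_of_nonneg _ _ N.cast_nonneg, lt_min_iff] at hξ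
  have hlower : 1 ≤ ⌊(N : ℝ) * Int.fract ξ⌋ := by
    rw [Int.le_floor]
    push_cast
    linarith
  have hupper : ⌊(N : ℝ) * Int.fract ξ⌋ < N - 1 := by
    rw [Int.floor_lt]
    push_cast
    linarith
  exact Finset.mem_Icc.2 ⟨hlower, by omega⟩

/- Rotate so that one of the `N` points sits at `0`. If all pairs were more than `1 / N` apart, the
other `N - 1` points would lie in the `N - 2` intervals `[k / N, (k + 1) / N)`, `1 ≤ k ≤ N - 2`. -/
theorem exists_ne_nint_sub_mul_card_le_one {ι : Type*} {s : Finset ι} (hs : s.Nontrivial)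
    (x : ι → ℝ) : ∃ i ∈ s, ∃ j ∈ s, i ≠ j ∧ nint (x i - x j) * s.card ≤ 1 := by
  classical
  by_contra! hfar
  obtain ⟨o, ho⟩ := hs.nonempty
  have hmaps : ∀ i ∈ s.erase o,
      ⌊(s.card : ℝ) * Int.fract (x i - x o)⌋ ∈ Finset.Icc (1 : ℤ) (s.card - 2) := fun i hi ↦
    floor_mul_fract_mem_Icc_of_one_lt_nint_mul
      (hfar i (Finset.mem_of_mem_erase hi) o ho (Finset.ne_of_mem_erase hi))
  have hcard : (Finset.Icc (1 : ℤ) (s.card - 2)).card < (s.erase o).card := by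
    have := Finset.one_lt_card_iff_nontrivial.2 hs
    rw [Finset.card_erase_of_mem ho, Int.card_Icc]
    omega
  obtain ⟨i, hi, j, hj, hij, hfloor⟩ := Finset.exists_ne_map_eq_of_card_lt_of_maps_to hcard hmaps
  have hclose := Int.abs_sub_lt_one_of_floor_eq_floor hfloor
  rw [← mul_sub, abs_mul, Nat.abs_cast, mul_comm] at hclose
  have hnint := nint_sub_le_abs_fract_sub_fract (x i - x o) (x j - x o)
  rw [sub_sub_sub_cancel_right] at hnint
  have hij_far := hfar i (Finset.mem_of_mem_erase hi) j (Finset.mem_of_mem_erase hj) hij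
  exact (hij_far.trans_le (mul_le_mul_of_nonneg_right hnint s.card.cast_nonneg)).not_gt hclose

theorem exists_ne_zero_nint_sum_mul_pow_card_le_one {ι : Type*} [Fintype ι] [Nonempty ι]
    (α : ι → ℝ) {M : ℕ} (hM : 1 < M) :
    ∃ q : ι → ℤ, q ≠ 0 ∧ (∀ i, |q i| < M) ∧
      nint (∑ i, q i * α i) * (M : ℝ) ^ Fintype.card ι ≤ 1 := by
  classical
  let box : Finset (ι → ℤ) := Fintype.piFinset fun _ ↦ Finset.Ico 0 (M : ℤ)
  have hcard : box.card = M ^ Fintype.card ι := by simp [box]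
  have hbox : box.Nontrivial := by
    rw [← Finset.one_lt_card_iff_nontrivial, hcard]
    exact Nat.one_lt_pow Fintype.card_ne_zero hM
  obtain ⟨u, hu, v, hv, huv, hnint⟩ :=
    exists_ne_nint_sub_mul_card_le_one hbox fun q ↦ ∑ i, q i * α i
  simp only [box, Fintype.mem_piFinset, Finset.mem_Ico] at hu hv
  refine ⟨u - v, sub_ne_zero.2 huv, fun i ↦ ?_, ?_⟩
  · have := hu i
    have := hv i
    rw [Pi.sub_apply, abs_lt]
    omega
  · simpa [hcard, sub_mul] using hnint

lemma hgt_pos_iff {m : ℤ × ℤ × ℤ} : 0 < hgt m ↔ m.2 ≠ 0 := by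
  simp only [hgt, lt_max_iff, abs_pos, ne_eq, Prod.ext_iff, Prod.fst_zero, Prod.snd_zero]
  tauto

section LinearForm

variable (α₁ α₂ : ℝ)

lemma nint_le_abs_zform (m : ℤ × ℤ × ℤ) : nint (m.2.1 * α₁ + m.2.2 * α₂) ≤ |zform α₁ α₂ m| := by
  convert nint_le_abs_sub_intCast (m.2.1 * α₁ + m.2.2 * α₂) (-m.1) using 2
  rw [zform]
  push_cast
  ring

lemma exists_abs_zform_eq_nint (q : ℤ × ℤ) :
    ∃ k : ℤ, |zform α₁ α₂ (k, q)| = nint (q.1 * α₁ + q.2 * α₂) := by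
  refine ⟨-round (q.1 * α₁ + q.2 * α₂), ?_⟩
  rw [zform, nint]
  push_cast
  ring_nf

theorem exists_hgt_lt_abs_zform_mul_sq_le_one {M : ℕ} (hM : 1 < M) :
    ∃ n : ℤ × ℤ × ℤ, 0 < hgt n ∧ hgt n < M ∧ |zform α₁ α₂ n| * (M : ℝ) ^ 2 ≤ 1 := by
  obtain ⟨q, hq, hqM, hnint⟩ := exists_ne_zero_nint_sum_mul_pow_card_le_one ![α₁, α₂] hM
  obtain ⟨k, hk⟩ := exists_abs_zform_eq_nint α₁ α₂ (q 0, q 1)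
  refine ⟨(k, q 0, q 1), hgt_pos_iff.2 fun hzero ↦ hq ?_, max_lt (hqM 0) (hqM 1), ?_⟩
  · rw [Prod.mk_eq_zero] at hzero
    exact funext (Fin.forall_fin_two.2 hzero)
  · simpa [hk, Fin.sum_univ_two] using hnint

variable {α₁ α₂}

lemma exists_isBestApprox_hgt_le_abs_zform_le {n : ℤ × ℤ × ℤ} (hn : 0 < hgt n) :
    ∃ m, IsBestApprox α₁ α₂ m ∧ hgt m ≤ hgt n ∧ |zform α₁ α₂ m| ≤ |zform α₁ α₂ n| := by
  let candidates : Set (ℤ × ℤ) := {q | q ≠ 0 ∧ |q.1| ≤ hgt n ∧ |q.2| ≤ hgt n}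
  have hmem (m : ℤ × ℤ × ℤ) : m.2 ∈ candidates ↔ 0 < hgt m ∧ hgt m ≤ hgt n := by
    rw [hgt_pos_iff, hgt, max_le_iff]
    rfl
  have hfinite : candidates.Finite :=
    ((Set.finite_Icc (-hgt n) (hgt n)).prod (Set.finite_Icc (-hgt n) (hgt n))).subset
      fun _ hq ↦ ⟨abs_le.1 hq.2.1, abs_le.1 hq.2.2⟩
  obtain ⟨q, hq, hqmin⟩ := Set.exists_min_image candidates
    (fun q ↦ nint (q.1 * α₁ + q.2 * α₂)) hfinite ⟨n.2, (hmem n).2 ⟨hn, le_rfl⟩⟩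
  obtain ⟨k, hk⟩ := exists_abs_zform_eq_nint α₁ α₂ q
  obtain ⟨hpos, hle⟩ := (hmem (k, q)).1 hq
  have hmin (m : ℤ × ℤ × ℤ) (hm : 0 < hgt m) (hmn : hgt m ≤ hgt n) :
      |zform α₁ α₂ (k, q)| ≤ |zform α₁ α₂ m| :=
    hk.trans_le ((hqmin m.2 ((hmem m).2 ⟨hm, hmn⟩)).trans (nint_le_abs_zform α₁ α₂ m))
  exact ⟨(k, q), ⟨hpos, fun m hm hmq ↦ hmin m hm (hmq.trans hle)⟩, hle, hmin n hn le_rfl⟩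

namespace ConsecutiveBest

variable {a b n : ℤ × ℤ × ℤ}

theorem abs_zform_le_of_hgt_lt (hab : ConsecutiveBest α₁ α₂ a b) (hn : 0 < hgt n)
    (hnb : hgt n < hgt b) : |zform α₁ α₂ a| ≤ |zform α₁ α₂ n| := by
  obtain ⟨ha, -, -, hgap⟩ := hab
  obtain ⟨m, hm, hmn, hζ⟩ := exists_isBestApprox_hgt_le_abs_zform_le (α₁ := α₁) (α₂ := α₂) hn
  have hma : hgt m ≤ hgt a := (hgap m hm).resolve_right (hmn.trans_lt hnb).not_ge
  exact (ha.2 m hm.1 hma).trans hζ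

theorem abs_zform_mul_sq_hgt_le_one (hab : ConsecutiveBest α₁ α₂ a b) :
    |zform α₁ α₂ a| * (hgt b : ℝ) ^ 2 ≤ 1 := by
  have hb : 1 < hgt b := (Int.add_one_le_of_lt hab.1.1).trans_lt hab.2.2.1
  obtain ⟨M, hM⟩ := Int.eq_ofNat_of_zero_le hab.2.1.1.le
  obtain ⟨n, hn, hnM, hζ⟩ :=
    exists_hgt_lt_abs_zform_mul_sq_le_one α₁ α₂ (M := M) (by exact_mod_cast hM ▸ hb)
  rw [← Int.cast_natCast, ← hM] at hζ
  exact (mul_le_mul_of_nonneg_right (hab.abs_zform_le_of_hgt_lt hn (hM ▸ hnM))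
    (sq_nonneg _)).trans hζ

end ConsecutiveBest

/-- The minor of the two rows `u`, `v` obtained by deleting their constant coordinates `u₀`, `v₀`;
in the notation of the theorem, `D_ν = |minor m_ν m_{ν+1}|`. -/
def minor (u v : ℤ × ℤ × ℤ) : ℤ := u.2.1 * v.2.2 - u.2.2 * v.2.1

lemma abs_minor_le (u v : ℤ × ℤ × ℤ) : |minor u v| ≤ 2 * hgt u * hgt v := by
  have hu : 0 ≤ hgt u := (abs_nonneg _).trans (le_max_left _ _)
  calc |minor u v| ≤ |u.2.1| * |v.2.2| + |u.2.2| * |v.2.1| := by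
        rw [← abs_mul, ← abs_mul]
        exact abs_sub _ _
    _ ≤ hgt u * hgt v + hgt u * hgt v := by
        gcongr
        exacts [le_max_left _ _, le_max_right _ _, le_max_right _ _, le_max_left _ _]
    _ = 2 * hgt u * hgt v := by ring

lemma cast_det_eq_zform_mul_minor (a b c : ℤ × ℤ × ℤ) :
    ((Matrix.det !![a.1, a.2.1, a.2.2; b.1, b.2.1, b.2.2; c.1, c.2.1, c.2.2] : ℤ) : ℝ) =
      zform α₁ α₂ a * minor b c - zform α₁ α₂ b * minor a c + zform α₁ α₂ c * minor a b := by
  simp only [Matrix.det_fin_three, Matrix.of_apply, Matrix.cons_val, zform, minor]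
  push_cast
  ring

lemma abs_zform_mul_minor_le_quarter {u v w : ℤ × ℤ × ℤ}
    (h : |zform α₁ α₂ u| * (8 * hgt v * hgt w) ≤ 1) : |zform α₁ α₂ u * minor v w| ≤ 1 / 4 := by
  have hminor : |(minor v w : ℝ)| ≤ 2 * hgt v * hgt w := by exact_mod_cast abs_minor_le v w
  calc |zform α₁ α₂ u * minor v w| = |zform α₁ α₂ u| * |(minor v w : ℝ)| := abs_mul _ _
    _ ≤ |zform α₁ α₂ u| * (2 * hgt v * hgt w) := by gcongr
    _ ≤ 1 / 4 := by linarith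

theorem half_le_abs_zform_mul_abs_minor {a b c : ℤ × ℤ × ℤ}
    (hdet : Matrix.det !![a.1, a.2.1, a.2.2; b.1, b.2.1, b.2.2; c.1, c.2.1, c.2.2] ≠ 0)
    (hb : |zform α₁ α₂ b| * (8 * hgt a * hgt c) ≤ 1)
    (hc : |zform α₁ α₂ c| * (8 * hgt a * hgt b) ≤ 1) :
    1 / 2 ≤ |zform α₁ α₂ a| * |(minor b c : ℝ)| := by
  have hone : (1 : ℝ) ≤ |zform α₁ α₂ a * minor b c - zform α₁ α₂ b * minor a c
      + zform α₁ α₂ c * minor a b| := by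
    rw [← cast_det_eq_zform_mul_minor]
    exact_mod_cast Int.one_le_abs hdet
  have htriangle := hone.trans ((abs_add_le _ _).trans (add_le_add_left (abs_sub _ _) _))
  rw [← abs_mul]
  linarith [abs_zform_mul_minor_le_quarter hb, abs_zform_mul_minor_le_quarter hc]

end LinearForm

theorem lemma2_det_bound_general {α₁ α₂ : ℝ} {a b c : ℤ × ℤ × ℤ}
    (hab : ConsecutiveBest α₁ α₂ a b) (hc : 0 < hgt c)
    (hdet : Matrix.det !![a.1, a.2.1, a.2.2; b.1, b.2.1, b.2.2; c.1, c.2.1, c.2.2] ≠ 0)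
    (h1 : |zform α₁ α₂ b| ≤ (8 * (hgt a : ℝ) * (hgt c : ℝ))⁻¹)
    (h2 : |zform α₁ α₂ c| ≤ (8 * (hgt a : ℝ) * (hgt b : ℝ))⁻¹) :
    (2 * |zform α₁ α₂ a|)⁻¹ ≤ ((|b.2.1 * c.2.2 - b.2.2 * c.2.1| : ℤ) : ℝ) ∧
    (hgt b : ℝ) ^ 2 / 2 ≤ ((|b.2.1 * c.2.2 - b.2.2 * c.2.1| : ℤ) : ℝ) := by
  have hA : (0 : ℝ) < hgt a := by exact_mod_cast hab.1.1
  have hB : (0 : ℝ) < hgt b := by exact_mod_cast hab.2.1.1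
  have hC : (0 : ℝ) < hgt c := by exact_mod_cast hc
  rw [← one_div, le_div_iff₀ (by positivity)] at h1 h2
  have hhalf := half_le_abs_zform_mul_abs_minor hdet h1 h2
  have hζ : 0 < |zform α₁ α₂ a| :=
    pos_of_mul_pos_left (one_half_pos.trans_le hhalf) (abs_nonneg _)
  rw [← minor, Int.cast_abs]
  constructor
  · rw [inv_le_iff_one_le_mul₀ (by positivity)]
    linarith
  · refine le_of_mul_le_mul_left ?_ hζ
    linarith [hab.abs_zform_mul_sq_hgt_le_one]

/-- Under the hypotheses of Lemma 2, D_ν = |m_{1,ν}m_{2,ν+1} − m_{2,ν}m_{1,ν+1}| satisfies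
D_ν ≥ (2ζ_{ν−1})⁻¹ and consequently D_ν ≥ M_ν²/2. -/
theorem lemma2_det_bound (α₁ α₂ : ℝ) (h : ZLinIndep α₁ α₂)
    (a b c : ℤ × ℤ × ℤ)
    (hab : ConsecutiveBest α₁ α₂ a b) (hbc : ConsecutiveBest α₁ α₂ b c)
    (hdet : Matrix.det !![a.1, a.2.1, a.2.2; b.1, b.2.1, b.2.2; c.1, c.2.1, c.2.2] ≠ 0)
    (h1 : |zform α₁ α₂ b| ≤ (8 * (hgt a : ℝ) * (hgt c : ℝ))⁻¹)
    (h2 : |zform α₁ α₂ c| ≤ (8 * (hgt a : ℝ) * (hgt b : ℝ))⁻¹) :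
    (2 * |zform α₁ α₂ a|)⁻¹ ≤ ((|b.2.1 * c.2.2 - b.2.2 * c.2.1| : ℤ) : ℝ) ∧
    (hgt b : ℝ) ^ 2 / 2 ≤ ((|b.2.1 * c.2.2 - b.2.2 * c.2.1| : ℤ) : ℝ) :=
  lemma2_det_bound_general hab hbc.2.1.1 hdet h1 h2
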